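/- arXiv:1611.02851 — 2 statements merged into one kernel-verified Lean document; each statement's English description precedes it below -/
import Mathlib

section
/- Let n ∈ ℕ. There exist constants c₁(n), c₂(n) > 0 such that for every finitely supported family of reals (α_{k,j})_{k,j∈ℕ}, setting f(x,t) := Σ_{k,j} α_{k,j} H_k(t) P̃_j(x), one has c₁(n) Σ_{k≥n, j≥n} α_{k,j}² kⁿ j^{2n} ≤ ∫_ℝ ∫_{−1}^{1} ( ∂ⁿ_t ∂ⁿ_x f(x,t) )² (1−x²)ⁿ dx dγ(t) ≤ c₂(n) Σ_{k≥n, j≥n} α_{k,j}² kⁿ j^{2n}. -/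
/-!
Differentiation preserves the orthogonality of both polynomial systems. In `L²(γ)` the creation
operator `p ↦ X p - p'` is adjoint to `d/dt` (Gaussian integration by parts), which gives
orthogonality of the `He_k`; together with `He_k' = k He_{k-1}` it follows that the `n`-th
derivatives of the `H_k` are orthogonal with squared norm `k! / (k - n)!`
(`gaussian_iterate_derivative_hermiteN`).

On `(-1, 1)`, the `n`-th derivative of `P_j` satisfies the Gegenbauer equation
`((1 - x²)^(n+1) u')' = (n - j) (j + n + 1) (1 - x²)^n u`. Integrating by parts, the inner product
of the `(n+1)`-st derivatives with weight `(1 - x²)^(n+1)` is `(j - n) (j + n + 1)` times that of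
the `n`-th derivatives with weight `(1 - x²)^n`. Symmetry in the two indices gives orthogonality,
and the case `n = j`, which reduces to `∫ (1 - x²)^j`, gives the norm of `P_j`. Hence the `n`-th
derivatives of the normalized Legendre polynomials are orthogonal with squared norm
`(j + n)! / (j - n)!` (`integral_iterate_derivative_legendreN`).

Consequently the integral equals `∑ α_{k,j}² · k!/(k-n)! · (j+n)!/(j-n)!`
(`integral_sq_mixed_derivative`), where the quotients of factorials are written as descending
factorials, so that they vanish for `k < n` or `j < n`. For `k, j ≥ n` their product lies between
`(n + 1)^(-3n) k^n j^(2n)` and `4^n k^n j^(2n)`.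
-/

open MeasureTheory Polynomial ProbabilityTheory

/-- Legendre polynomial of degree `j` via Rodrigues' formula. -/
noncomputable def legendreP (j : ℕ) : Polynomial ℝ :=
  Polynomial.C ((2 ^ j * Nat.factorial j : ℝ)⁻¹) *
    (Polynomial.derivative^[j] ((Polynomial.X ^ 2 - 1) ^ j))

/-- Normalized Legendre polynomial, orthonormal in `L²((-1,1))`. -/
noncomputable def legendreN (j : ℕ) : Polynomial ℝ :=
  Polynomial.C (Real.sqrt ((2 * j + 1) / 2)) * legendreP j

/-- Normalized (probabilist's) Hermite polynomial, orthonormal in `L²(ℝ, γ)`. -/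
noncomputable def hermiteN (k : ℕ) : Polynomial ℝ :=
  Polynomial.C ((Real.sqrt (Nat.factorial k))⁻¹) *
    (Polynomial.hermite k).map (Int.castRingHom ℝ)

/-! ### Gaussian integration by parts and Hermite polynomials -/

theorem integrable_eval_gaussian (p : ℝ[X]) :
    Integrable (fun t => p.eval t) (gaussianReal 0 1) := by
  induction p using Polynomial.induction_on' with
  | add p q hp hq =>
    simp only [eval_add]
    exact hp.add hq
  | monomial m a =>
    simp only [eval_monomial]
    refine Integrable.const_mul ?_ a
    have h := (memLp_id_gaussianReal (μ := 0) (v := 1) (m : NNReal)).integrable_norm_pow'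
    refine h.mono' (by fun_prop) (ae_of_all _ fun t => ?_)
    simp

theorem integrable_eval_mul_gaussianPDF (p : ℝ[X]) :
    Integrable (fun t => p.eval t * gaussianPDFReal 0 1 t) := by
  have h := integrable_eval_gaussian p
  rw [gaussianReal_of_var_ne_zero _ one_ne_zero,
    integrable_withDensity_iff_integrable_smul' (measurable_gaussianPDF _ _)
      (ae_of_all _ fun _ => gaussianPDF_lt_top)] at h
  simpa [mul_comm] using h

theorem hasDerivAt_gaussianPDF (t : ℝ) :
    HasDerivAt (gaussianPDFReal 0 1) (-t * gaussianPDFReal 0 1 t) t := by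
  have h1 : HasDerivAt (fun x : ℝ => -(x - 0) ^ 2 / (2 * ((1 : NNReal) : ℝ))) (-t) t := by
    refine ((((hasDerivAt_id t).sub_const 0).pow 2).neg.div_const _).congr_deriv ?_
    simp
    ring
  refine (h1.exp.const_mul (√(2 * Real.pi * ((1 : NNReal) : ℝ)))⁻¹).congr_deriv ?_
  rw [gaussianPDFReal]
  ring

/-- Gaussian integration by parts (the Stein identity) for polynomials. -/
theorem gaussian_stein (p : ℝ[X]) :
    ∫ t, (X * p).eval t ∂(gaussianReal 0 1) =
      ∫ t, (derivative p).eval t ∂(gaussianReal 0 1) := by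
  have hd : ∀ t, HasDerivAt (fun t => p.eval t * gaussianPDFReal 0 1 t)
      ((derivative p - X * p).eval t * gaussianPDFReal 0 1 t) t := fun t => by
    refine ((p.hasDerivAt t).mul (hasDerivAt_gaussianPDF t)).congr_deriv ?_
    simp only [eval_sub, eval_mul, eval_X]
    ring
  have h0 := integral_eq_zero_of_hasDerivAt_of_integrable hd
    (integrable_eval_mul_gaussianPDF _) (integrable_eval_mul_gaussianPDF _)
  have h1 : ∫ t, (derivative p - X * p).eval t ∂(gaussianReal 0 1) = 0 := by
    rw [integral_gaussianReal_eq_integral_smul one_ne_zero]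
    refine Eq.trans (integral_congr_ae (ae_of_all _ fun t => ?_)) h0
    exact mul_comm _ _
  simp only [eval_sub] at h1
  rw [integral_sub (integrable_eval_gaussian _) (integrable_eval_gaussian _)] at h1
  linarith

/-- The Hermite polynomial `He_k` with real coefficients. -/
noncomputable def hermiteR (k : ℕ) : ℝ[X] := (hermite k).map (Int.castRingHom ℝ)

theorem hermiteR_zero : hermiteR 0 = 1 := by simp [hermiteR]

theorem hermiteR_succ (k : ℕ) :
    hermiteR (k + 1) = X * hermiteR k - derivative (hermiteR k) := by
  simp [hermiteR, hermite_succ, derivative_map]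

theorem derivative_hermiteR_succ (k : ℕ) :
    derivative (hermiteR (k + 1)) = C ((k : ℝ) + 1) * hermiteR k := by
  induction k with
  | zero => simp [hermiteR_succ, hermiteR_zero]
  | succ k ih =>
    rw [hermiteR_succ (k + 1), derivative_sub, derivative_mul, derivative_X, ih,
      derivative_C_mul, hermiteR_succ k]
    push_cast
    simp only [C_add, C_1]
    ring

/-- The creation operator `p ↦ X p - p'` is adjoint to differentiation in `L²(γ)`. -/
theorem gaussian_hermiteR_succ_mul (k : ℕ) (q : ℝ[X]) :
    ∫ t, (hermiteR (k + 1) * q).eval t ∂(gaussianReal 0 1) =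
      ∫ t, (hermiteR k * derivative q).eval t ∂(gaussianReal 0 1) := by
  have h := gaussian_stein (hermiteR k * q)
  have e : hermiteR (k + 1) * q =
      X * (hermiteR k * q) - derivative (hermiteR k * q) + hermiteR k * derivative q := by
    rw [hermiteR_succ, derivative_mul]; ring
  have hadd : ∀ p q : ℝ[X], ∫ t, (p + q).eval t ∂(gaussianReal 0 1) =
      ∫ t, p.eval t ∂(gaussianReal 0 1) + ∫ t, q.eval t ∂(gaussianReal 0 1) := fun p q => by
    simp only [eval_add]
    exact integral_add (integrable_eval_gaussian _) (integrable_eval_gaussian _)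
  have hsub : ∀ p q : ℝ[X], ∫ t, (p - q).eval t ∂(gaussianReal 0 1) =
      ∫ t, p.eval t ∂(gaussianReal 0 1) - ∫ t, q.eval t ∂(gaussianReal 0 1) := fun p q => by
    simp only [eval_sub]
    exact integral_sub (integrable_eval_gaussian _) (integrable_eval_gaussian _)
  rw [e, hadd, hsub, h, sub_self, zero_add]

theorem gaussian_hermiteR_mul (k l : ℕ) :
    ∫ t, (hermiteR k * hermiteR l).eval t ∂(gaussianReal 0 1) =
      if k = l then (k.factorial : ℝ) else 0 := by
  induction k generalizing l with
  | zero =>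
    cases l with
    | zero => simp [hermiteR_zero]
    | succ l =>
      rw [mul_comm, gaussian_hermiteR_succ_mul]
      simp [hermiteR_zero]
  | succ k ih =>
    rw [gaussian_hermiteR_succ_mul]
    cases l with
    | zero => simp [hermiteR_zero]
    | succ l =>
      rw [derivative_hermiteR_succ]
      have e : hermiteR k * (C ((l : ℝ) + 1) * hermiteR l) =
        C ((l : ℝ) + 1) * (hermiteR k * hermiteR l) := by ring
      rw [e]
      simp only [eval_C_mul]
      rw [integral_const_mul, ih]
      by_cases h : k = l
      · subst h; simp [Nat.factorial_succ]
      · simp [h]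

theorem gaussian_iterate_derivative_hermiteR (n k l : ℕ) :
    ∫ t, (derivative^[n] (hermiteR k) * derivative^[n] (hermiteR l)).eval t
        ∂(gaussianReal 0 1) =
      if k = l then (k.factorial : ℝ) * k.descFactorial n else 0 := by
  induction n generalizing k l with
  | zero => simpa using gaussian_hermiteR_mul k l
  | succ n ih =>
    cases k with
    | zero => simp [hermiteR_zero]
    | succ k =>
      cases l with
      | zero => simp [hermiteR_zero]
      | succ l =>
        simp only [Function.iterate_succ_apply, derivative_hermiteR_succ,
          iterate_derivative_C_mul]
        have e : C ((k : ℝ) + 1) * derivative^[n] (hermiteR k) *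
            (C ((l : ℝ) + 1) * derivative^[n] (hermiteR l)) =
            C (((k : ℝ) + 1) * ((l : ℝ) + 1)) *
              (derivative^[n] (hermiteR k) * derivative^[n] (hermiteR l)) := by
          rw [C_mul]; ring
        rw [e]
        simp only [eval_C_mul]
        rw [integral_const_mul, ih]
        by_cases h : k = l
        · subst h
          rw [if_pos rfl, if_pos rfl, Nat.factorial_succ, Nat.succ_descFactorial_succ]
          push_cast
          ring
        · simp [h]

theorem gaussian_iterate_derivative_hermiteN (n k l : ℕ) :
    ∫ t, (derivative^[n] (hermiteN k)).eval t * (derivative^[n] (hermiteN l)).eval t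
        ∂(gaussianReal 0 1) =
      if k = l then (k.descFactorial n : ℝ) else 0 := by
  have e : ∀ k, hermiteN k = C ((√(k.factorial : ℝ))⁻¹) * hermiteR k := fun k => rfl
  have h := gaussian_iterate_derivative_hermiteR n k l
  simp only [eval_mul] at h
  simp only [e, iterate_derivative_C_mul, eval_C_mul, mul_mul_mul_comm]
  rw [integral_const_mul, h]
  by_cases hkl : k = l
  · subst hkl
    have : (k.factorial : ℝ) ≠ 0 := by positivity
    rw [← mul_inv, Real.mul_self_sqrt (by positivity)]
    simp [this]
  · simp [hkl]

/-! ### Derivatives of Legendre polynomials -/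

theorem intervalIntegrable_eval (p : ℝ[X]) (a b : ℝ) :
    IntervalIntegrable (fun x => p.eval x) volume a b :=
  p.continuous.intervalIntegrable a b

theorem integral_derivative_eval (p : ℝ[X]) (a b : ℝ) :
    ∫ x in a..b, (derivative p).eval x = p.eval b - p.eval a :=
  intervalIntegral.integral_eq_sub_of_hasDerivAt (fun x _ => p.hasDerivAt x)
    (intervalIntegrable_eval _ _ _)

theorem derivative_X_sq_sub_one : derivative (X ^ 2 - 1 : ℝ[X]) = 2 * X := by
  rw [derivative_sub, derivative_one, derivative_X_sq, sub_zero]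
  rfl

/-- Repeated differentiation of `(x² - 1) u' = 2 j x u` for `u = (x² - 1)^j`; at `m ≥ j` this
is the differential equation of the derivatives of `P_j`. -/
theorem iterate_derivative_X_sq_sub_one_pow (j m : ℕ) :
    (X ^ 2 - 1) * derivative^[m + 2] ((X ^ 2 - 1 : ℝ[X]) ^ j) =
      C (2 * ((j : ℝ) - m - 1)) * X * derivative^[m + 1] ((X ^ 2 - 1 : ℝ[X]) ^ j)
      + C (((m : ℝ) + 1) * (2 * j - m)) * derivative^[m] ((X ^ 2 - 1 : ℝ[X]) ^ j) := by
  induction m with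
  | zero =>
    have h1 : (X ^ 2 - 1) * derivative ((X ^ 2 - 1 : ℝ[X]) ^ j) =
        C (2 * (j : ℝ)) * X * (X ^ 2 - 1 : ℝ[X]) ^ j := by
      cases j with
      | zero => simp
      | succ j =>
        simp only [derivative_pow, derivative_sub, derivative_one, derivative_X, C_mul,
          Nat.add_sub_cancel]
        simp
        ring
    have h2 := congrArg derivative h1
    simp only [derivative_mul (f := (X ^ 2 - 1 : ℝ[X])), derivative_X_sq_sub_one,
      derivative_mul (f := C (2 * (j : ℝ)) * X),
      derivative_C_mul, derivative_X] at h2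
    simp only [Function.iterate_succ_apply', Function.iterate_zero, id]
    have c2 : (C 2 : ℝ[X]) = 2 := rfl
    simp only [Nat.cast_zero, C_mul, C_sub, C_add, C_1, C_0, c2] at h2 ⊢
    linear_combination h2
  | succ m ih =>
    have h2 := congrArg derivative ih
    simp only [derivative_add, derivative_mul (f := (X ^ 2 - 1 : ℝ[X])),
      derivative_X_sq_sub_one, derivative_C_mul, mul_assoc, derivative_mul (f := X),
      derivative_X, ← Function.iterate_succ_apply' derivative] at h2
    push_cast
    have c2 : (C 2 : ℝ[X]) = 2 := rfl
    simp only [C_mul, C_sub, C_add, C_1, c2, Nat.succ_eq_add_one, add_assoc, Nat.reduceAdd] at h2 ⊢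
    linear_combination h2

/-- The `n`-th derivative of `P_j` satisfies the Gegenbauer equation, here in its
self-adjoint form. -/
theorem derivative_weight_mul_legendreP (n j : ℕ) :
    derivative ((1 - X ^ 2) ^ (n + 1) * derivative^[n + 1] (legendreP j)) =
      C (((n : ℝ) - j) * (j + n + 1)) * ((1 - X ^ 2) ^ n * derivative^[n] (legendreP j)) := by
  have c2 : (C 2 : ℝ[X]) = 2 := rfl
  have h := iterate_derivative_X_sq_sub_one_pow j (n + j)
  have hode : (X ^ 2 - 1) * derivative^[n + 2] (legendreP j) =
      C (-2 * ((n : ℝ) + 1)) * X * derivative^[n + 1] (legendreP j)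
      + C (((n : ℝ) + j + 1) * (j - n)) * derivative^[n] (legendreP j) := by
    simp only [legendreP, iterate_derivative_C_mul, ← Function.iterate_add_apply]
    rw [show n + 2 + j = n + j + 2 by ring, show n + 1 + j = n + j + 1 by ring]
    push_cast at h
    simp only [C_mul, C_sub, C_add, C_1, C_neg, c2] at h ⊢
    linear_combination C ((2 ^ j * (j.factorial : ℝ))⁻¹) * h
  have h3 : derivative ((1 - X ^ 2 : ℝ[X]) ^ (n + 1)) =
      C (-2 * ((n : ℝ) + 1)) * X * (1 - X ^ 2) ^ n := by
    simp [derivative_pow]; ring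
  rw [derivative_mul, ← Function.iterate_succ_apply' derivative, h3]
  simp only [C_mul, C_sub, C_add, C_1, C_neg, c2, Nat.succ_eq_add_one, add_assoc, Nat.reduceAdd]
    at hode ⊢
  rw [pow_succ]
  linear_combination (-(1 - X ^ 2) ^ n) * hode

/-- The weighted inner product of the `n`-th derivatives of two Legendre polynomials. -/
noncomputable def legendreInner (n i j : ℕ) : ℝ :=
  ∫ x in (-1 : ℝ)..1,
    (derivative^[n] (legendreP i) * ((1 - X ^ 2) ^ n * derivative^[n] (legendreP j))).eval x

theorem legendreInner_comm (n i j : ℕ) : legendreInner n i j = legendreInner n j i := by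
  unfold legendreInner
  congr 1; ext x; congr 1; ring

/-- Integration by parts moves one derivative over and the Gegenbauer equation produces the
eigenvalue. -/
theorem legendreInner_succ (n i j : ℕ) :
    legendreInner (n + 1) i j = ((j : ℝ) - n) * (j + n + 1) * legendreInner n i j := by
  have h := integral_derivative_eval (derivative^[n] (legendreP i) *
    ((1 - X ^ 2) ^ (n + 1) * derivative^[n + 1] (legendreP j))) (-1) 1
  rw [derivative_mul, derivative_weight_mul_legendreP,
    ← Function.iterate_succ_apply' derivative] at h
  simp only [eval_add (p := derivative^[n.succ] (legendreP i) * _)] at h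
  rw [intervalIntegral.integral_add (intervalIntegrable_eval _ _ _)
    (intervalIntegrable_eval _ _ _)] at h
  simp only [mul_left_comm _ (C _) _] at h
  simp only [eval_C_mul] at h
  rw [intervalIntegral.integral_const_mul] at h
  simp only [eval_mul (q := _ * derivative^[n + 1] (legendreP j)), eval_pow, eval_sub, eval_one,
    eval_mul, eval_X] at h
  unfold legendreInner
  simp only [eval_mul, eval_pow, eval_sub, eval_one, eval_X, Nat.succ_eq_add_one] at h ⊢
  -- The boundary terms vanish because `1 - x²` does at `x = ±1`.
  rw [show (1 : ℝ) - 1 ^ 2 = 0 by norm_num, show (1 : ℝ) - (-1) ^ 2 = 0 by norm_num] at h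
  simp only [zero_pow (Nat.succ_ne_zero n), zero_mul, mul_zero, sub_zero] at h
  linarith

/-- `legendreInner_succ` and symmetry give two eigenvalues for the same number, hence
orthogonality. -/
theorem legendreInner_eq_zero_base {i j : ℕ} (hij : i ≠ j) : legendreInner 0 i j = 0 := by
  have h1 := legendreInner_succ 0 i j
  have h2 := legendreInner_succ 0 j i
  rw [legendreInner_comm, h2, legendreInner_comm] at h1
  have h3 : ((i : ℝ) - j) * (i + j + 1) * legendreInner 0 i j = 0 := by
    push_cast at h1; linarith
  have h4 : (i : ℝ) - j ≠ 0 := sub_ne_zero.2 (by exact_mod_cast hij)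
  have h5 : (i : ℝ) + j + 1 ≠ 0 := by positivity
  simpa [h4, h5] using h3

/-- The factor is `(j + n)! / (j - n)!`, and `0` if `j < n`. -/
theorem legendreInner_eq (n i j : ℕ) :
    legendreInner n i j = (j + n).descFactorial (2 * n) * legendreInner 0 i j := by
  induction n with
  | zero => simp
  | succ n ih =>
    rw [legendreInner_succ, ih, show j + (n + 1) = (j + n) + 1 by ring,
      show 2 * (n + 1) = (2 * n + 1) + 1 by ring, Nat.succ_descFactorial_succ,
      Nat.descFactorial_succ]
    rcases le_or_gt n j with h | h
    · rw [show j + n - 2 * n = j - n by omega]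
      push_cast [Nat.cast_sub h]
      ring
    · rw [Nat.descFactorial_of_lt (show j + n < 2 * n by omega)]
      simp

theorem integral_one_sub_sq_pow (j : ℕ) :
    ∫ x in (-1 : ℝ)..1, (((1 : ℝ[X]) - X ^ 2) ^ j).eval x =
      2 * (2 ^ j * (j.factorial : ℝ)) ^ 2 / (2 * j + 1).factorial := by
  induction j with
  | zero => norm_num
  | succ j ih =>
    have h := integral_derivative_eval (X * ((1 : ℝ[X]) - X ^ 2) ^ (j + 1)) (-1) 1
    have e : derivative (X * ((1 : ℝ[X]) - X ^ 2) ^ (j + 1)) =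
        C (2 * (j : ℝ) + 3) * (1 - X ^ 2) ^ (j + 1) - C (2 * (j : ℝ) + 2) * (1 - X ^ 2) ^ j := by
      have c2 : (C 2 : ℝ[X]) = 2 := rfl
      have c3 : (C 3 : ℝ[X]) = 3 := rfl
      simp [derivative_mul, derivative_pow, c2, c3]; ring
    rw [e] at h
    simp only [eval_sub (p := C _ * (1 - X ^ 2) ^ (j + 1)), eval_C_mul] at h
    rw [intervalIntegral.integral_sub ((intervalIntegrable_eval _ _ _).const_mul _)
      ((intervalIntegrable_eval _ _ _).const_mul _), intervalIntegral.integral_const_mul,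
      intervalIntegral.integral_const_mul, ih] at h
    simp only [eval_mul, eval_X, eval_pow, eval_sub, eval_one] at h ⊢
    norm_num at h
    have h3 : (2 * (j : ℝ) + 3) ≠ 0 := by positivity
    refine mul_left_cancel₀ h3 ?_
    rw [sub_eq_zero.1 h, show 2 * (j + 1) + 1 = (2 * j + 1) + 1 + 1 by ring,
      Nat.factorial_succ (2 * j + 1 + 1), Nat.factorial_succ (2 * j + 1), Nat.factorial_succ j]
    have : ((2 * j + 1).factorial : ℝ) ≠ 0 := by positivity
    push_cast
    field_simp
    ring

theorem iterate_derivative_legendreP_self (j : ℕ) :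
    derivative^[j] (legendreP j) = C ((2 * j).factorial / (2 ^ j * (j.factorial : ℝ))) := by
  have hm : ((X ^ 2 - 1 : ℝ[X]) ^ j).Monic := by
    have : (X ^ 2 - 1 : ℝ[X]).Monic := by
      simpa using monic_X_pow_sub_C (1 : ℝ) (two_ne_zero)
    exact this.pow j
  have hd : ((X ^ 2 - 1 : ℝ[X]) ^ j).natDegree = 2 * j := by
    rw [natDegree_pow, show (X ^ 2 - 1 : ℝ[X]) = X ^ 2 - C 1 by simp, natDegree_X_pow_sub_C,
      mul_comm]
  have h : derivative^[2 * j] ((X ^ 2 - 1 : ℝ[X]) ^ j) = C ((2 * j).factorial : ℝ) := by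
    have h0 := natDegree_iterate_derivative ((X ^ 2 - 1 : ℝ[X]) ^ j) (2 * j)
    rw [hd, Nat.sub_self] at h0
    rw [eq_C_of_natDegree_le_zero h0, coeff_iterate_derivative]
    have hc : ((X ^ 2 - 1 : ℝ[X]) ^ j).coeff (0 + 2 * j) = 1 := by
      rw [zero_add, ← hd]; exact hm
    rw [hc]
    simp [Nat.descFactorial_self]
  rw [legendreP, iterate_derivative_C_mul, ← Function.iterate_add_apply, ← two_mul, h, ← C_mul]
  congr 1
  rw [mul_comm, div_eq_mul_inv]

/-- Comparing `legendreInner_eq` at `n = j`, where the `j`-th derivative of `P_j` is constant,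
with the explicit value of `∫ (1 - x²)^j`. -/
theorem legendreInner_self (j : ℕ) : legendreInner 0 j j = 2 / (2 * j + 1) := by
  have h := legendreInner_eq j j j
  rw [← two_mul, Nat.descFactorial_self] at h
  rw [legendreInner, iterate_derivative_legendreP_self] at h
  simp only [mul_comm _ (C _), mul_left_comm _ (C _) _, eval_C_mul] at h
  rw [intervalIntegral.integral_const_mul, intervalIntegral.integral_const_mul,
    integral_one_sub_sq_pow, Nat.factorial_succ] at h
  have h1 : ((2 * j).factorial : ℝ) ≠ 0 := by positivity
  refine mul_left_cancel₀ h1 (h.symm.trans ?_)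
  push_cast
  field_simp

theorem integral_iterate_derivative_legendreN (n i j : ℕ) :
    ∫ x in (-1 : ℝ)..1, (derivative^[n] (legendreN i)).eval x *
        (derivative^[n] (legendreN j)).eval x * (1 - x ^ 2) ^ n =
      if i = j then ((j + n).descFactorial (2 * n) : ℝ) else 0 := by
  have e : ∀ x : ℝ, (derivative^[n] (legendreN i)).eval x *
        (derivative^[n] (legendreN j)).eval x * (1 - x ^ 2) ^ n =
      (√((2 * i + 1) / 2) * √((2 * j + 1) / 2)) *
        (derivative^[n] (legendreP i) *
          ((1 - X ^ 2) ^ n * derivative^[n] (legendreP j))).eval x := fun x => by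
    simp only [legendreN, iterate_derivative_C_mul, eval_mul, eval_C, eval_pow, eval_sub,
      eval_one, eval_X]
    ring
  simp only [e]
  rw [intervalIntegral.integral_const_mul]
  change _ * legendreInner n i j = _
  rw [legendreInner_eq]
  by_cases hij : i = j
  · subst hij
    rw [legendreInner_self, Real.mul_self_sqrt (by positivity), if_pos rfl]
    field_simp
  · simp [hij, legendreInner_eq_zero_base hij]

/-! ### The mixed derivative and bounds on the weights -/

theorem iteratedDeriv_eval (p : ℝ[X]) (n : ℕ) :
    iteratedDeriv n (fun x => p.eval x) = fun x => (derivative^[n] p).eval x := by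
  induction n with
  | zero => simp
  | succ n ih =>
    rw [iteratedDeriv_succ, ih]
    ext x
    rw [Polynomial.deriv, Function.iterate_succ_apply']

theorem iteratedDeriv_sum_eval {ι : Type*} (S : Finset ι) (c : ι → ℝ) (q : ι → ℝ[X]) (n : ℕ)
    (x : ℝ) :
    iteratedDeriv n (fun y => ∑ p ∈ S, c p * (q p).eval y) x =
      ∑ p ∈ S, c p * (derivative^[n] (q p)).eval x := by
  have h := congrFun (iteratedDeriv_eval (∑ p ∈ S, C (c p) * q p) n) x
  simpa only [eval_finsetSum, eval_C_mul, iterate_derivative_sum, iterate_derivative_C_mul]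
    using h

theorem iteratedDeriv_kernel (α : ℕ × ℕ → ℝ) (S : Finset (ℕ × ℕ))
    (hS : ∀ p ∉ S, α p = 0) (n : ℕ) (x t : ℝ) :
    iteratedDeriv n (fun s : ℝ => iteratedDeriv n (fun y : ℝ =>
      ∑' p : ℕ × ℕ, α p * (hermiteN p.1).eval s * (legendreN p.2).eval y) x) t =
    ∑ p ∈ S, α p * (derivative^[n] (hermiteN p.1)).eval t *
      (derivative^[n] (legendreN p.2)).eval x := by
  have h1 : ∀ s y : ℝ, ∑' p : ℕ × ℕ, α p * (hermiteN p.1).eval s * (legendreN p.2).eval y =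
      ∑ p ∈ S, α p * (hermiteN p.1).eval s * (legendreN p.2).eval y := fun s y =>
    tsum_eq_sum fun p hp => by simp [hS p hp]
  simp only [h1, iteratedDeriv_sum_eval S]
  simp only [mul_right_comm (α _) (eval _ (hermiteN _))]
  rw [iteratedDeriv_sum_eval]
  exact Finset.sum_congr rfl fun p _ => by ring

/-- Parseval identity for the mixed derivative. -/
theorem integral_sq_mixed_derivative (α : ℕ × ℕ → ℝ) (S : Finset (ℕ × ℕ)) (n : ℕ) :
    ∫ t, (∫ x in (-1 : ℝ)..1, (∑ p ∈ S, α p * (derivative^[n] (hermiteN p.1)).eval t *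
        (derivative^[n] (legendreN p.2)).eval x) ^ 2 * (1 - x ^ 2) ^ n) ∂(gaussianReal 0 1) =
      ∑ p ∈ S, α p ^ 2 * (p.1.descFactorial n * (p.2 + n).descFactorial (2 * n)) := by
  have hx : ∀ t : ℝ, ∫ x in (-1 : ℝ)..1, (∑ p ∈ S, α p * (derivative^[n] (hermiteN p.1)).eval t *
        (derivative^[n] (legendreN p.2)).eval x) ^ 2 * (1 - x ^ 2) ^ n =
      ∑ p ∈ S, ∑ q ∈ S, (α p * α q *
        (if p.2 = q.2 then ((q.2 + n).descFactorial (2 * n) : ℝ) else 0)) *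
          ((derivative^[n] (hermiteN p.1)).eval t * (derivative^[n] (hermiteN q.1)).eval t) := by
    intro t
    have e : ∀ x : ℝ, (∑ p ∈ S, α p * (derivative^[n] (hermiteN p.1)).eval t *
        (derivative^[n] (legendreN p.2)).eval x) ^ 2 * (1 - x ^ 2) ^ n =
        ∑ p ∈ S, ∑ q ∈ S, (α p * α q * ((derivative^[n] (hermiteN p.1)).eval t *
          (derivative^[n] (hermiteN q.1)).eval t)) *
          ((derivative^[n] (legendreN p.2)).eval x * (derivative^[n] (legendreN q.2)).eval x *
            (1 - x ^ 2) ^ n) := fun x => by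
      rw [sq, Finset.sum_mul_sum, Finset.sum_mul]
      refine Finset.sum_congr rfl fun p _ => ?_
      rw [Finset.sum_mul]
      exact Finset.sum_congr rfl fun q _ => by ring
    simp only [e]
    have hi : ∀ p q : ℕ × ℕ, IntervalIntegrable (fun x : ℝ =>
        (α p * α q * ((derivative^[n] (hermiteN p.1)).eval t *
          (derivative^[n] (hermiteN q.1)).eval t)) *
          ((derivative^[n] (legendreN p.2)).eval x * (derivative^[n] (legendreN q.2)).eval x *
            (1 - x ^ 2) ^ n)) volume (-1) 1 := fun p q =>
      Continuous.intervalIntegrable (by fun_prop) _ _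
    rw [intervalIntegral.integral_finsetSum fun p _ =>
      Continuous.intervalIntegrable (by fun_prop) _ _]
    refine Finset.sum_congr rfl fun p _ => ?_
    rw [intervalIntegral.integral_finsetSum fun q _ => hi p q]
    refine Finset.sum_congr rfl fun q _ => ?_
    rw [intervalIntegral.integral_const_mul, integral_iterate_derivative_legendreN]
    ring
  simp only [hx]
  have hi : ∀ (c : ℝ) (p q : ℕ × ℕ), Integrable (fun t : ℝ => c *
      ((derivative^[n] (hermiteN p.1)).eval t * (derivative^[n] (hermiteN q.1)).eval t))
      (gaussianReal 0 1) := fun c p q => by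
    simpa only [eval_mul] using (integrable_eval_gaussian
      (derivative^[n] (hermiteN p.1) * derivative^[n] (hermiteN q.1))).const_mul c
  rw [integral_finsetSum _ fun p _ => integrable_finsetSum _ fun q _ => hi _ p q]
  refine Finset.sum_congr rfl fun p hp => ?_
  rw [integral_finsetSum _ fun q _ => hi _ p q]
  simp only [integral_const_mul, gaussian_iterate_derivative_hermiteN]
  rw [Finset.sum_eq_single_of_mem p hp]
  · simp; ring
  · intro q _ hqp
    have : ¬ (p.1 = q.1 ∧ p.2 = q.2) := fun h => hqp (Prod.ext h.1 h.2).symm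
    by_cases h1 : p.1 = q.1 <;> by_cases h2 : p.2 = q.2 <;> simp_all

theorem eigenvalue_lower {n k j : ℕ} (hk : n ≤ k) (hj : n ≤ j) :
    (((n : ℝ) + 1) ^ (3 * n))⁻¹ * ((k : ℝ) ^ n * (j : ℝ) ^ (2 * n)) ≤
      k.descFactorial n * (j + n).descFactorial (2 * n) := by
  -- `m ≤ (n + 1) (m + 1 - n)` for `m ≥ n`, and `m + 1 - n` is the smallest factor of each product.
  have key : ∀ m, n ≤ m → m ≤ (n + 1) * (m + 1 - n) := fun m hm => by
    obtain ⟨d, rfl⟩ := Nat.exists_eq_add_of_le hm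
    rw [show n + d + 1 - n = d + 1 by omega]
    nlinarith
  have h1 : k ^ n ≤ (n + 1) ^ n * k.descFactorial n :=
    calc k ^ n ≤ ((n + 1) * (k + 1 - n)) ^ n := Nat.pow_le_pow_left (key k hk) n
      _ = (n + 1) ^ n * (k + 1 - n) ^ n := mul_pow _ _ _
      _ ≤ _ := Nat.mul_le_mul_left _ (Nat.pow_sub_le_descFactorial k n)
  have h2 : j ^ (2 * n) ≤ (n + 1) ^ (2 * n) * (j + n).descFactorial (2 * n) :=
    calc j ^ (2 * n) ≤ ((n + 1) * (j + 1 - n)) ^ (2 * n) := Nat.pow_le_pow_left (key j hj) _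
      _ = (n + 1) ^ (2 * n) * (j + n + 1 - 2 * n) ^ (2 * n) := by
        rw [mul_pow, show j + n + 1 - 2 * n = j + 1 - n by omega]
      _ ≤ _ := Nat.mul_le_mul_left _ (Nat.pow_sub_le_descFactorial _ _)
  have h3 := Nat.mul_le_mul h1 h2
  rw [inv_mul_le_iff₀ (by positivity)]
  calc (k : ℝ) ^ n * (j : ℝ) ^ (2 * n)
      ≤ ((n + 1) ^ n * k.descFactorial n) *
          ((n + 1) ^ (2 * n) * (j + n).descFactorial (2 * n)) := by exact_mod_cast h3
    _ = _ := by ring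

theorem eigenvalue_upper {n j : ℕ} (k : ℕ) (hj : n ≤ j) :
    (k.descFactorial n * (j + n).descFactorial (2 * n) : ℝ) ≤
      4 ^ n * ((k : ℝ) ^ n * (j : ℝ) ^ (2 * n)) := by
  have h2 : (j + n).descFactorial (2 * n) ≤ (2 * j) ^ (2 * n) :=
    (Nat.descFactorial_le_pow _ _).trans (Nat.pow_le_pow_left (by omega) _)
  have h3 := Nat.mul_le_mul (Nat.descFactorial_le_pow k n) h2
  calc (k.descFactorial n * (j + n).descFactorial (2 * n) : ℝ)
      ≤ (k : ℝ) ^ n * (2 * j) ^ (2 * n) := by exact_mod_cast h3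
    _ = _ := by rw [mul_pow, pow_mul 2 2 n]; norm_num; ring

theorem stmt2 (n : ℕ) :
    ∃ c₁ c₂ : ℝ, 0 < c₁ ∧ 0 < c₂ ∧
      ∀ α : ℕ × ℕ → ℝ, (Function.support α).Finite →
        c₁ * (∑' p : ℕ × ℕ, if n ≤ p.1 ∧ n ≤ p.2 then
                (α p) ^ 2 * (p.1 : ℝ) ^ n * (p.2 : ℝ) ^ (2 * n) else 0)
          ≤ (∫ t, (∫ x in (-1 : ℝ)..1,
              (iteratedDeriv n (fun s : ℝ => iteratedDeriv n (fun y : ℝ =>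
                  ∑' p : ℕ × ℕ, α p * (hermiteN p.1).eval s * (legendreN p.2).eval y) x) t) ^ 2
                * (1 - x ^ 2) ^ n) ∂(gaussianReal 0 1)) ∧
        (∫ t, (∫ x in (-1 : ℝ)..1,
              (iteratedDeriv n (fun s : ℝ => iteratedDeriv n (fun y : ℝ =>
                  ∑' p : ℕ × ℕ, α p * (hermiteN p.1).eval s * (legendreN p.2).eval y) x) t) ^ 2
                * (1 - x ^ 2) ^ n) ∂(gaussianReal 0 1))
          ≤ c₂ * (∑' p : ℕ × ℕ, if n ≤ p.1 ∧ n ≤ p.2 then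
                (α p) ^ 2 * (p.1 : ℝ) ^ n * (p.2 : ℝ) ^ (2 * n) else 0) := by
  refine ⟨(((n : ℝ) + 1) ^ (3 * n))⁻¹, 4 ^ n, by positivity, by positivity, fun α hα => ?_⟩
  have hS : ∀ p ∉ hα.toFinset, α p = 0 := fun p hp => by simpa using hp
  simp only [iteratedDeriv_kernel α hα.toFinset hS n]
  rw [integral_sq_mixed_derivative,
    tsum_eq_sum (s := hα.toFinset) (fun p hp => by simp [hS p hp]),
    Finset.mul_sum, Finset.mul_sum]
  -- Modes with `k < n` or `j < n` are annihilated: their descending factorials vanish.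
  have hzero : ∀ p : ℕ × ℕ, ¬ (n ≤ p.1 ∧ n ≤ p.2) →
      (p.1.descFactorial n * (p.2 + n).descFactorial (2 * n) : ℝ) = 0 := fun p hp => by
    rcases not_and_or.1 hp with h | h
    · rw [Nat.descFactorial_of_lt (not_le.1 h)]; simp
    · rw [Nat.descFactorial_of_lt (show p.2 + n < 2 * n by omega)]; simp
  constructor <;> refine Finset.sum_le_sum fun p _ => ?_ <;> split_ifs with h
  · have := mul_le_mul_of_nonneg_left (eigenvalue_lower h.1 h.2) (sq_nonneg (α p))
    linarith
  · simp [hzero p h]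
  · have := mul_le_mul_of_nonneg_left (eigenvalue_upper p.1 h.2) (sq_nonneg (α p))
    linarith
  · simp [hzero p h]
end

section
/- There exists a constant C > 0 such that for all k ∈ ℕ, all u ∈ [−1,1] and all γ ∈ [0,1], |H_k(0) − H_k(u)| ≤ C · |u|^γ · (k+1)^{γ/4}. -/
/-!
Write `q = hermiteN k`. Since `q'' = x q' - k q`, the energy `E = (q')² + k q²` satisfies
`E' = 2 x (q')²`, so `E(x) exp(-x²)` is maximal at the origin and `E ≤ 3 E(0)` on `[-1, 1]`
(`energy_le`). At the origin, `He_{k+2}(0) = -(k+1) He_k(0)` yields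
`H_k(0)² ≤ (k+1)^{-1/2}` (`hermiteN_zero_bound`), and `q'(0)² = (k+1) H_{k+1}(0)²`, so that
`E(0) ≤ 2 √(k+1)`. For `k ≥ 1` it follows that `|q| ≤ 3` and `|q'| ≤ 3 (k+1)^{1/4}` on `[-1, 1]`;
the increment of `q` is therefore at most `6` and at most `3 |u| (k+1)^{1/4}`, and the claim is the
geometric interpolation of these two bounds.
-/

open Polynomial

lemma derivative_hermite_succ (n : ℕ) :
    derivative (hermite (n + 1)) = ((n : ℤ[X]) + 1) * hermite n := by
  induction n with
  | zero => simp
  | succ n ih =>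
    rw [hermite_succ (n + 1), derivative_sub, derivative_mul, ih, derivative_mul,
      hermite_succ n]
    simp
    ring

/-- The Hermite differential equation. -/
lemma hermite_ode (n : ℕ) :
    derivative (derivative (hermite n)) = X * derivative (hermite n) - (n : ℤ[X]) * hermite n := by
  have h := derivative_hermite_succ n
  rw [hermite_succ, derivative_sub, derivative_mul, derivative_X] at h
  linear_combination -h

lemma hermiteN_ode (k : ℕ) (x : ℝ) :
    (derivative (derivative (hermiteN k))).eval x
      = x * (derivative (hermiteN k)).eval x - k * (hermiteN k).eval x := by
  have h := congrArg (fun p : ℤ[X] => (p.map (Int.castRingHom ℝ)).eval x) (hermite_ode k)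
  simp only [Polynomial.map_sub, Polynomial.map_mul, Polynomial.map_natCast, map_X, eval_sub,
    eval_mul, eval_X, eval_natCast, ← derivative_map] at h
  simp only [hermiteN, derivative_C_mul, eval_mul, eval_C]
  rw [h]
  ring

lemma energy_le (k : ℕ) (u : ℝ) (hu : u ∈ Set.Icc (-1 : ℝ) 1) :
    (derivative (hermiteN k)).eval u ^ 2 + k * (hermiteN k).eval u ^ 2
      ≤ 3 * ((derivative (hermiteN k)).eval 0 ^ 2 + k * (hermiteN k).eval 0 ^ 2) := by
  set q := hermiteN k with hq
  set g : ℝ → ℝ := fun x =>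
    ((derivative q).eval x ^ 2 + k * q.eval x ^ 2) * Real.exp (-x ^ 2) with hg
  have hd : ∀ x, HasDerivAt g (-(2 * x * (k * q.eval x ^ 2)) * Real.exp (-x ^ 2)) x := by
    intro x
    have h1 := ((((derivative q).hasDerivAt x).pow 2).add
      (((q.hasDerivAt x).pow 2).const_mul (k : ℝ))).mul
        (((hasDerivAt_id x).pow 2).neg.exp)
    refine h1.congr_deriv ?_
    simp only [hq, hermiteN_ode, Pi.pow_apply, Pi.add_apply, Pi.neg_apply, id]
    push_cast
    ring
  have hc : Continuous g := continuous_iff_continuousAt.2 fun x => (hd x).continuousAt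
  have h0 : g u ≤ g 0 := by
    rcases le_total 0 u with h | h
    · have : AntitoneOn g (Set.Ici 0) := by
        refine antitoneOn_of_deriv_nonpos (convex_Ici 0) hc.continuousOn
          (fun x _ => (hd x).differentiableAt.differentiableWithinAt) fun x hx => ?_
        rw [interior_Ici, Set.mem_Ioi] at hx
        rw [(hd x).deriv, neg_mul, neg_nonpos]
        positivity
      exact this (Set.mem_Ici.2 le_rfl) h h
    · have : MonotoneOn g (Set.Iic 0) := by
        refine monotoneOn_of_deriv_nonneg (convex_Iic 0) hc.continuousOn
          (fun x _ => (hd x).differentiableAt.differentiableWithinAt) fun x hx => ?_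
        rw [interior_Iic, Set.mem_Iio] at hx
        rw [(hd x).deriv]
        have h2 : 0 ≤ -x * ((k : ℝ) * q.eval x ^ 2) := by
          have : 0 ≤ -x := by linarith
          positivity
        exact mul_nonneg (by linarith) (Real.exp_pos _).le
      exact this h (Set.mem_Iic.2 le_rfl) h
  simp only [hg] at h0
  norm_num at h0
  have he : Real.exp (u ^ 2) ≤ 3 := by
    have : u ^ 2 ≤ 1 := by nlinarith [hu.1, hu.2]
    exact (Real.exp_le_exp.2 this).trans (by linarith [Real.exp_one_lt_d9])
  have hE : 0 ≤ (derivative q).eval 0 ^ 2 + k * q.eval 0 ^ 2 := by positivity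
  rw [Real.exp_neg, ← div_eq_mul_inv, div_le_iff₀ (Real.exp_pos _)] at h0
  nlinarith

lemma hermiteN_sq (k : ℕ) (x : ℝ) : (hermiteN k).eval x ^ 2 * (k.factorial : ℝ)
    = ((hermite k).map (Int.castRingHom ℝ)).eval x ^ 2 := by
  have hf : (0 : ℝ) < k.factorial := by positivity
  simp only [hermiteN, eval_mul, eval_C, mul_pow, inv_pow, Real.sq_sqrt hf.le]
  field_simp

lemma hermiteN_zero_succ_succ (k : ℕ) :
    ((k : ℝ) + 2) * (hermiteN (k + 2)).eval 0 ^ 2 = (k + 1) * (hermiteN k).eval 0 ^ 2 := by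
  have h : ((hermite (k + 2)).map (Int.castRingHom ℝ)).eval 0
      = -((k : ℝ) + 1) * ((hermite k).map (Int.castRingHom ℝ)).eval 0 := by
    rw [hermite_succ (k + 1), derivative_hermite_succ]
    simp
    ring
  have h2 := hermiteN_sq (k + 2) 0
  rw [h, mul_pow, ← hermiteN_sq k 0, Nat.factorial_succ, Nat.factorial_succ] at h2
  push_cast at h2
  have hf : (0 : ℝ) < ((k : ℝ) + 1) * k.factorial := by positivity
  apply mul_right_cancel₀ hf.ne'
  linear_combination h2

lemma derivative_hermiteN_zero_sq (k : ℕ) :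
    (derivative (hermiteN k)).eval 0 ^ 2 = (k + 1) * (hermiteN (k + 1)).eval 0 ^ 2 := by
  have h2 := hermiteN_sq (k + 1) 0
  rw [hermite_succ, Nat.factorial_succ] at h2
  have hf : (0 : ℝ) < k.factorial := by positivity
  apply mul_right_cancel₀ hf.ne'
  simp only [Polynomial.map_sub, Polynomial.map_mul, map_X, eval_sub, eval_mul, eval_X,
    ← derivative_map] at h2
  push_cast at h2
  simp only [hermiteN, derivative_C_mul, eval_mul, eval_C, mul_pow, inv_pow,
    Real.sq_sqrt hf.le] at h2 ⊢
  field_simp at h2 ⊢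
  linear_combination -h2

/-- The decay `H_k(0)² ≤ (k+1)^{-1/2}`, in squared form; the induction step is
`(k+1)(k+3) ≤ (k+2)²`. -/
lemma hermiteN_zero_bound (k : ℕ) : ((hermiteN k).eval 0 ^ 2) ^ 2 * ((k : ℝ) + 1) ≤ 1 := by
  induction k using Nat.twoStepInduction with
  | zero => simp [hermiteN]
  | one => simp [hermiteN]
  | more k ih _ =>
    have h := hermiteN_zero_succ_succ k
    set a := (hermiteN k).eval 0 ^ 2
    set b := (hermiteN (k + 2)).eval 0 ^ 2
    have hk : (0 : ℝ) ≤ k := k.cast_nonneg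
    have hb : b = (k + 1) * a / (k + 2) := by field_simp; linarith
    push_cast
    rw [hb, div_pow, div_mul_eq_mul_div, div_le_one (by positivity)]
    have : 0 ≤ a ^ 2 * (k + 1) := by positivity
    nlinarith [mul_le_mul_of_nonneg_right ih (by positivity : (0 : ℝ) ≤ (k + 1) * (k + 3))]

lemma energy_bound (k : ℕ) (u : ℝ) (hu : u ∈ Set.Icc (-1 : ℝ) 1) :
    (derivative (hermiteN k)).eval u ^ 2 + k * (hermiteN k).eval u ^ 2
      ≤ 6 * Real.sqrt (k + 1) := by
  refine (energy_le k u hu).trans ?_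
  rw [derivative_hermiteN_zero_sq]
  have hk : (0 : ℝ) ≤ k := k.cast_nonneg
  have h1 : ((k : ℝ) + 1) * (hermiteN (k + 1)).eval 0 ^ 2 ≤ Real.sqrt (k + 1) := by
    apply Real.le_sqrt_of_sq_le
    have := hermiteN_zero_bound (k + 1)
    push_cast at this
    set a := (hermiteN (k + 1)).eval 0 ^ 2
    have : a ^ 2 * (k + 1) ≤ 1 := by nlinarith [sq_nonneg a]
    nlinarith
  have h2 : (k : ℝ) * (hermiteN k).eval 0 ^ 2 ≤ Real.sqrt (k + 1) := by
    apply Real.le_sqrt_of_sq_le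
    have := hermiteN_zero_bound k
    set a := (hermiteN k).eval 0 ^ 2
    have : a ^ 2 * k ≤ 1 := by nlinarith [sq_nonneg a]
    nlinarith
  linarith

lemma abs_hermiteN_le (k : ℕ) (hk : 1 ≤ k) (u : ℝ) (hu : u ∈ Set.Icc (-1 : ℝ) 1) :
    |(hermiteN k).eval u| ≤ 3 := by
  have h := energy_bound k u hu
  have hk' : (1 : ℝ) ≤ k := by exact_mod_cast hk
  -- `√(k+1) ≤ (3/2) k` for `k ≥ 1`, and `6 * 3/2 = 3²`.
  have hs : Real.sqrt (k + 1) ≤ 3 / 2 * k := Real.sqrt_le_iff.2 ⟨by positivity, by nlinarith⟩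
  apply abs_le_of_sq_le_sq _ (by norm_num)
  have : (k : ℝ) * (hermiteN k).eval u ^ 2 ≤ k * 3 ^ 2 := by
    nlinarith [sq_nonneg ((derivative (hermiteN k)).eval u)]
  exact le_of_mul_le_mul_left this (by linarith)

lemma abs_derivative_hermiteN_le (k : ℕ) (u : ℝ) (hu : u ∈ Set.Icc (-1 : ℝ) 1) :
    |(derivative (hermiteN k)).eval u| ≤ 3 * ((k : ℝ) + 1) ^ (1 / 4 : ℝ) := by
  have h := energy_bound k u hu
  have hr : (((k : ℝ) + 1) ^ (1 / 4 : ℝ)) ^ 2 = Real.sqrt (k + 1) := by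
    rw [← Real.rpow_natCast, ← Real.rpow_mul (by positivity), Real.sqrt_eq_rpow]
    norm_num
  apply abs_le_of_sq_le_sq _ (by positivity)
  rw [mul_pow, hr]
  have : 0 ≤ (k : ℝ) * (hermiteN k).eval u ^ 2 := by positivity
  linarith [Real.sqrt_nonneg ((k : ℝ) + 1)]

theorem stmt16 :
    ∃ C : ℝ, 0 < C ∧
      ∀ (k : ℕ) (u γ : ℝ), u ∈ Set.Icc (-1 : ℝ) 1 → γ ∈ Set.Icc (0 : ℝ) 1 →
        |(hermiteN k).eval 0 - (hermiteN k).eval u|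
          ≤ C * |u| ^ γ * ((k : ℝ) + 1) ^ (γ / 4) := by
  refine ⟨6, by norm_num, fun k u γ hu hγ => ?_⟩
  rcases Nat.eq_zero_or_pos k with rfl | hk
  · have : |(hermiteN 0).eval 0 - (hermiteN 0).eval u| = 0 := by simp [hermiteN]
    rw [this]
    positivity
  have hm : (0 : ℝ) ∈ Set.Icc (-1 : ℝ) 1 := by norm_num
  set D := |(hermiteN k).eval 0 - (hermiteN k).eval u| with hD
  have hD0 : 0 ≤ D := abs_nonneg _
  have h1 : D ≤ 6 := by
    have := abs_sub ((hermiteN k).eval 0) ((hermiteN k).eval u)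
    linarith [abs_hermiteN_le k hk u hu, abs_hermiteN_le k hk 0 hm]
  set r := ((k : ℝ) + 1) ^ (1 / 4 : ℝ) with hr
  have hr0 : 0 ≤ r := by positivity
  have h2 : D ≤ 6 * (|u| * r) := by
    have := (convex_Icc (-1 : ℝ) 1).norm_image_sub_le_of_norm_hasDerivWithin_le
      (f := fun x => (hermiteN k).eval x) (fun x _ => ((hermiteN k).hasDerivAt x).hasDerivWithinAt)
      (fun x hx => abs_derivative_hermiteN_le k x hx) hu hm
    simp only [Real.norm_eq_abs, zero_sub, abs_neg] at this
    have h3 : 0 ≤ |u| * r := by positivity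
    linarith
  calc D = D ^ (1 - γ) * D ^ γ := by
        rw [← Real.rpow_add' hD0 (by norm_num)]
        norm_num
    _ ≤ 6 ^ (1 - γ) * (6 * (|u| * r)) ^ γ := by
        have := hγ.1
        have : 0 ≤ 1 - γ := by linarith [hγ.2]
        gcongr
    _ = 6 * |u| ^ γ * ((k : ℝ) + 1) ^ (γ / 4) := by
        rw [Real.mul_rpow (by norm_num) (by positivity), Real.mul_rpow (abs_nonneg _) hr0, hr,
          ← Real.rpow_mul (by positivity), ← mul_assoc, ← Real.rpow_add (by norm_num)]
        rw [show 1 - γ + γ = 1 by ring, Real.rpow_one, show 1 / 4 * γ = γ / 4 by ring]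
        ring
end
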